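/- arXiv:math/0610769 — 3 statements merged into one kernel-verified Lean document; each statement's English description precedes it below -/
import Mathlib

section
/- Let α = (α_1,…,α_d) be a multi-index with α_i ∈ (0,2]∖{1}, let κ > 0, T > 0, η ∈ (0,1), and let μ be a nonnegative measure on ℝ^d satisfying (H_η^α). Then for every β ∈ (0, 1−η) there exists a constant c > 0 such that for all h ∈ [0,T], ∫_{ℝ^d} (∫_0^h exp(−2κ r S_α(ξ)) dr) μ(dξ) ≤ c (h + h^β). -/
open MeasureTheory

/-- `S_α(ξ) = ∑ i |ξ_i|^{α_i}`. -/
noncomputable def Sa {d : ℕ} (α : Fin d → ℝ) (ξ : Fin d → ℝ) : ℝ :=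
  ∑ i, |ξ i| ^ (α i)

/-!
The inner integral `I = ∫₀ʰ exp (-(a r s)) dr` is at most `h`, and `a s I ≤ 1`, so
`(1 + s) I ≤ h + 1 / a`. Interpolating the two bounds with weights `β` and `1 - β` gives
`I ≤ h ^ β (h + 1 / a) ^ (1 - β) (1 + s) ^ (-(1 - β))`. Since `t ↦ t ^ (1 - β)` is subadditive,
the first two factors are at most `h + a ^ (-(1 - β)) h ^ β`, uniformly in `h ≥ 0`; since
`η ≤ 1 - β`, the last one is at most `(1 + s) ^ (-η)`, which is integrable.
-/

theorem le_rpow_one_sub_mul_rpow {x y z θ : ℝ} (hx : 0 ≤ x) (hxy : x ≤ y) (hxz : x ≤ z)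
    (hθ₀ : 0 ≤ θ) (hθ₁ : θ ≤ 1) : x ≤ y ^ (1 - θ) * z ^ θ := by
  have hθ : 0 ≤ 1 - θ := sub_nonneg.2 hθ₁
  have hy : 0 ≤ y := hx.trans hxy
  calc x = x ^ (1 - θ) * x ^ θ := by
        rw [← Real.rpow_add_of_nonneg hx hθ hθ₀, sub_add_cancel, Real.rpow_one]
    _ ≤ y ^ (1 - θ) * z ^ θ := by gcongr

theorem add_rpow_one_sub_mul_rpow_le {x y θ : ℝ} (hx : 0 ≤ x) (hy : 0 ≤ y)
    (hθ₀ : 0 ≤ θ) (hθ₁ : θ ≤ 1) :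
    (x + y) ^ (1 - θ) * x ^ θ ≤ x + y ^ (1 - θ) * x ^ θ := by
  have hθ : 0 ≤ 1 - θ := sub_nonneg.2 hθ₁
  calc (x + y) ^ (1 - θ) * x ^ θ ≤ (x ^ (1 - θ) + y ^ (1 - θ)) * x ^ θ := by
        gcongr
        exact Real.rpow_add_le_add_rpow hx hy hθ (sub_le_self 1 hθ₀)
    _ = x + y ^ (1 - θ) * x ^ θ := by
        rw [add_mul, ← Real.rpow_add_of_nonneg hx hθ hθ₀, sub_add_cancel, Real.rpow_one]

theorem mul_integral_exp_neg_mul (c h : ℝ) :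
    c * ∫ r in (0 : ℝ)..h, Real.exp (-(c * r)) = 1 - Real.exp (-(c * h)) := by
  have key := intervalIntegral.mul_integral_comp_mul_left (f := Real.exp) (a := 0) (b := h) (-c)
  simp only [integral_exp, mul_zero, Real.exp_zero, neg_mul] at key
  linarith

theorem integral_exp_neg_mul_nonneg (c : ℝ) {h : ℝ} (hh : 0 ≤ h) :
    0 ≤ ∫ r in (0 : ℝ)..h, Real.exp (-(c * r)) :=
  intervalIntegral.integral_nonneg hh fun _ _ => (Real.exp_pos _).le

theorem integral_exp_neg_mul_le {c h : ℝ} (hc : 0 ≤ c) (hh : 0 ≤ h) :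
    ∫ r in (0 : ℝ)..h, Real.exp (-(c * r)) ≤ h := by
  calc ∫ r in (0 : ℝ)..h, Real.exp (-(c * r)) ≤ ∫ _ in (0 : ℝ)..h, (1 : ℝ) := by
        refine intervalIntegral.integral_mono_on hh
          (Continuous.intervalIntegrable (by fun_prop) _ _) intervalIntegrable_const fun r hr => ?_
        exact Real.exp_le_one_iff.2 (neg_nonpos.2 (mul_nonneg hc hr.1))
    _ = h := by simp

theorem integral_exp_neg_mul_mul_le_div {a s h : ℝ} (ha : 0 < a) (hs : 0 ≤ s) (hh : 0 ≤ h) :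
    ∫ r in (0 : ℝ)..h, Real.exp (-(a * s * r)) ≤ (h + a⁻¹) / (1 + s) := by
  have length_bound := integral_exp_neg_mul_le (mul_nonneg ha.le hs) hh
  have decay_bound : s * ∫ r in (0 : ℝ)..h, Real.exp (-(a * s * r)) ≤ a⁻¹ := by
    rw [← one_div, le_div_iff₀' ha, ← mul_assoc, mul_integral_exp_neg_mul]
    exact sub_le_self 1 (Real.exp_pos _).le
  rw [le_div_iff₀' (by positivity), add_mul, one_mul]
  exact add_le_add length_bound decay_bound

theorem integral_exp_neg_mul_mul_le_mul_rpow {a s h β η : ℝ} (ha : 0 < a) (hs : 0 ≤ s)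
    (hh : 0 ≤ h) (hβ₀ : 0 ≤ β) (hβ₁ : β ≤ 1) (hη : η ≤ 1 - β) :
    ∫ r in (0 : ℝ)..h, Real.exp (-(a * s * r)) ≤
      (h + a⁻¹ ^ (1 - β) * h ^ β) * (1 + s) ^ (-η) := by
  calc ∫ r in (0 : ℝ)..h, Real.exp (-(a * s * r))
      ≤ ((h + a⁻¹) / (1 + s)) ^ (1 - β) * h ^ β :=
        le_rpow_one_sub_mul_rpow (integral_exp_neg_mul_nonneg _ hh)
          (integral_exp_neg_mul_mul_le_div ha hs hh)
          (integral_exp_neg_mul_le (mul_nonneg ha.le hs) hh) hβ₀ hβ₁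
    _ = (h + a⁻¹) ^ (1 - β) * h ^ β * (1 + s) ^ (-(1 - β)) := by
        rw [Real.div_rpow (by positivity) (by positivity), Real.rpow_neg (by positivity)]
        ring
    _ ≤ (h + a⁻¹ ^ (1 - β) * h ^ β) * (1 + s) ^ (-η) := by
        gcongr ?_ * ?_
        · exact add_rpow_one_sub_mul_rpow_le hh (inv_nonneg.2 ha.le) hβ₀ hβ₁
        · exact Real.rpow_le_rpow_of_exponent_le (le_add_of_nonneg_right hs) (neg_le_neg hη)

theorem lintegral_integral_exp_neg_mul_le {X : Type*} [MeasurableSpace X] (μ : Measure X)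
    {S : X → ℝ} (hS : ∀ x, 0 ≤ S x) {a h β η : ℝ} (ha : 0 < a) (hh : 0 ≤ h)
    (hβ₀ : 0 ≤ β) (hβ₁ : β ≤ 1) (hη : η ≤ 1 - β) :
    ∫⁻ x, ENNReal.ofReal (∫ r in (0 : ℝ)..h, Real.exp (-(a * S x * r))) ∂μ ≤
      ENNReal.ofReal (h + a⁻¹ ^ (1 - β) * h ^ β) *
        ∫⁻ x, ENNReal.ofReal ((1 + S x) ^ (-η)) ∂μ := by
  rw [← lintegral_const_mul' _ _ ENNReal.ofReal_ne_top]
  refine lintegral_mono fun x => ?_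
  rw [← ENNReal.ofReal_mul (by positivity)]
  exact ENNReal.ofReal_le_ofReal
    (integral_exp_neg_mul_mul_le_mul_rpow ha (hS x) hh hβ₀ hβ₁ hη)

theorem stmt12_general {X : Type*} [MeasurableSpace X] (μ : Measure X)
    {S : X → ℝ} (hS : ∀ x, 0 ≤ S x) {κ β η : ℝ} (hκ : 0 < κ)
    (hβ₀ : 0 ≤ β) (hβ₁ : β ≤ 1) (hη : η ≤ 1 - β)
    (hμ : ∫⁻ x, ENNReal.ofReal ((1 + S x) ^ (-η)) ∂μ < ⊤) :
    ∃ c : ℝ, 0 < c ∧ ∀ h : ℝ, 0 ≤ h →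
      ∫⁻ x, ENNReal.ofReal (∫ r in (0 : ℝ)..h, Real.exp (-(2 * κ * r * S x))) ∂μ ≤
        ENNReal.ofReal (c * (h + h ^ β)) := by
  set M := ∫⁻ x, ENNReal.ofReal ((1 + S x) ^ (-η)) ∂μ
  set K := (2 * κ)⁻¹ ^ (1 - β)
  have hK : 0 ≤ K := by positivity
  refine ⟨(1 + K) * (M.toReal + 1), by positivity, fun h hh => ?_⟩
  have hhβ : 0 ≤ h ^ β := Real.rpow_nonneg hh β
  simp only [mul_right_comm (2 * κ) _ (S _)]
  calc ∫⁻ x, ENNReal.ofReal (∫ r in (0 : ℝ)..h, Real.exp (-(2 * κ * S x * r))) ∂μ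
      ≤ ENNReal.ofReal (h + K * h ^ β) * M :=
        lintegral_integral_exp_neg_mul_le μ hS (by positivity) hh hβ₀ hβ₁ hη
    _ = ENNReal.ofReal ((h + K * h ^ β) * M.toReal) := by
        rw [ENNReal.ofReal_mul (by positivity), ENNReal.ofReal_toReal hμ.ne]
    _ ≤ ENNReal.ofReal ((1 + K) * (h + h ^ β) * (M.toReal + 1)) := by
        gcongr
        · nlinarith [mul_nonneg hK hh]
        · exact le_add_of_nonneg_right zero_le_one
    _ = ENNReal.ofReal ((1 + K) * (M.toReal + 1) * (h + h ^ β)) := by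
        rw [mul_right_comm]

theorem Sa_nonneg {d : ℕ} (α ξ : Fin d → ℝ) : 0 ≤ Sa α ξ :=
  Finset.sum_nonneg fun _ _ => Real.rpow_nonneg (abs_nonneg _) _

theorem stmt12 {d : ℕ} (hd : 0 < d) (α : Fin d → ℝ)
    (hα : ∀ i, 0 < α i ∧ α i ≤ 2 ∧ α i ≠ 1)
    (κ T η : ℝ) (hκ : 0 < κ) (hT : 0 < T) (hη : η ∈ Set.Ioo (0 : ℝ) 1)
    (μ : Measure (Fin d → ℝ))
    (hμ : (∫⁻ ξ, ENNReal.ofReal ((1 + Sa α ξ) ^ (-η)) ∂μ) < ⊤)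
    (β : ℝ) (hβ : β ∈ Set.Ioo (0 : ℝ) (1 - η)) :
    ∃ c : ℝ, 0 < c ∧ ∀ h ∈ Set.Icc (0 : ℝ) T,
      (∫⁻ ξ, ENNReal.ofReal (∫ r in (0 : ℝ)..h, Real.exp (-(2 * κ * r * Sa α ξ))) ∂μ) ≤
        ENNReal.ofReal (c * (h + h ^ β)) := by
  obtain ⟨c, hc, bound⟩ := stmt12_general μ (Sa_nonneg α) hκ hβ.1.le
    (hβ.2.le.trans (sub_le_self 1 hη.1.le)) (le_sub_comm.1 hβ.2.le) hμ
  exact ⟨c, hc, fun h hh => bound h hh.1⟩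
end

section
/- Let α = (α_1,…,α_d) be a multi-index with α_i ∈ (0,2]∖{1}, set α_0 = min_{1≤i≤d} α_i, let κ > 0, T > 0, η ∈ (0,1), and let μ be a nonnegative measure on ℝ^d satisfying (H_η^α). Let K be a compact subset of ℝ^d and let β satisfy 0 < β < min{1/2, α_0(1−η)/2}. Then there exists a constant c > 0 such that for all z ∈ K, ∫_{ℝ^d} ∫_0^T exp(−2κ r S_α(ξ)) (1 − cos(2π⟨ξ,z⟩)) dr μ(dξ) ≤ c (‖z‖_∞ + ‖z‖_∞^{2β}), where ‖z‖_∞ = max_{1≤i≤d} |z_i|. -/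
open MeasureTheory

/-!
For every `p ∈ [0, 2]` one has `1 - cos x ≤ 2 |x| ^ p`, while
`|ξ i| ≤ (1 + S_α(ξ)) ^ (1 / α₀)` bounds the phase `⟨ξ, z⟩` by
`d ‖z‖ (1 + S_α(ξ)) ^ (1 / α₀)`. Integrating the exponential in `r` gains a factor
`(1 + S_α(ξ))⁻¹`, so with `p = 2β` the inner integral is at most a constant times
`‖z‖ ^ (2β) (1 + S_α(ξ)) ^ (2β / α₀ - 1)`. The last exponent is at most `-η` exactly when
`2β ≤ α₀ (1 - η)`, and then `(H_η^α)` controls the integral in `ξ`.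
-/

theorem one_sub_cos_le_two_mul_abs_rpow {p : ℝ} (hp₀ : 0 ≤ p) (hp₂ : p ≤ 2) (x : ℝ) :
    1 - Real.cos x ≤ 2 * |x| ^ p := by
  rcases le_total 1 |x| with hx | hx
  · have one_le : 1 ≤ |x| ^ p := Real.one_le_rpow hx hp₀
    linarith [Real.neg_one_le_cos x]
  · have sq_le : x ^ 2 ≤ |x| ^ p := by
      rw [← sq_abs, ← Real.rpow_two]
      exact Real.rpow_le_rpow_of_exponent_ge' (abs_nonneg x) hx hp₀ hp₂
    linarith [Real.one_sub_sq_div_two_le_cos (x := x), sq_nonneg x]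

theorem mul_integral_exp_neg_mul_le_one (b T : ℝ) :
    b * ∫ r in (0 : ℝ)..T, Real.exp (-b * r) ≤ 1 := by
  have h := intervalIntegral.mul_integral_comp_mul_left (a := 0) (b := T) (f := Real.exp) (-b)
  rw [integral_exp, mul_zero, Real.exp_zero] at h
  linarith [Real.exp_pos (-b * T)]

theorem integral_exp_neg_mul_le_s13 {b T : ℝ} (hb : 0 ≤ b) (hT : 0 ≤ T) :
    ∫ r in (0 : ℝ)..T, Real.exp (-b * r) ≤ T := by
  calc ∫ r in (0 : ℝ)..T, Real.exp (-b * r) ≤ ∫ _ in (0 : ℝ)..T, (1 : ℝ) := by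
        refine intervalIntegral.integral_mono_on hT
          (Continuous.intervalIntegrable (by fun_prop) _ _) intervalIntegrable_const fun r hr => ?_
        rw [Real.exp_le_one_iff, neg_mul]
        exact neg_nonpos.2 (mul_nonneg hb hr.1)
    _ = T := by simp

theorem integral_exp_neg_mul_mul_le {k s T : ℝ} (hk : 0 < k) (hs : 0 ≤ s) (hT : 0 ≤ T) :
    ∫ r in (0 : ℝ)..T, Real.exp (-(k * r * s)) ≤ (T + 1 / k) * (1 + s)⁻¹ := by
  have exponent_eq (r : ℝ) : -(k * r * s) = -(k * s) * r := by ring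
  simp only [exponent_eq]
  have le_length := integral_exp_neg_mul_le_s13 (mul_nonneg hk.le hs) hT
  have le_inv_rate : s * ∫ r in (0 : ℝ)..T, Real.exp (-(k * s) * r) ≤ 1 / k := by
    rw [le_div_iff₀' hk, ← mul_assoc]
    exact mul_integral_exp_neg_mul_le_one (k * s) T
  rw [← div_eq_mul_inv, le_div_iff₀' (by positivity)]
  linarith

namespace Sa

variable {d : ℕ}

theorem nonneg (α ξ : Fin d → ℝ) : 0 ≤ Sa α ξ :=
  Finset.sum_nonneg fun _ _ => Real.rpow_nonneg (abs_nonneg _) _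

theorem abs_rpow_le (α ξ : Fin d → ℝ) (i : Fin d) : |ξ i| ^ α i ≤ Sa α ξ :=
  Finset.single_le_sum (f := fun j => |ξ j| ^ α j)
    (fun _ _ => Real.rpow_nonneg (abs_nonneg _) _) (Finset.mem_univ i)

variable {α : Fin d → ℝ} {a : ℝ}

theorem abs_le_one_add_rpow (ha : 0 < a) (hα : ∀ i, a ≤ α i) (ξ : Fin d → ℝ) (i : Fin d) :
    |ξ i| ≤ (1 + Sa α ξ) ^ (1 / a) := by
  have hS := nonneg α ξ
  have hαi : 0 < α i := ha.trans_le (hα i)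
  calc |ξ i| = (|ξ i| ^ α i) ^ (1 / α i) := by
        rw [one_div, Real.rpow_rpow_inv (abs_nonneg _) hαi.ne']
    _ ≤ (1 + Sa α ξ) ^ (1 / α i) := by
        gcongr
        linarith [abs_rpow_le α ξ i]
    _ ≤ (1 + Sa α ξ) ^ (1 / a) :=
        Real.rpow_le_rpow_of_exponent_le (by linarith) (one_div_le_one_div_of_le ha (hα i))

theorem abs_sum_mul_le (ha : 0 < a) (hα : ∀ i, a ≤ α i) (ξ z : Fin d → ℝ) :
    |∑ i, ξ i * z i| ≤ d * ‖z‖ * (1 + Sa α ξ) ^ (1 / a) := by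
  have hS := nonneg α ξ
  calc |∑ i, ξ i * z i| ≤ ∑ i, |ξ i| * ‖z i‖ := by
        simpa only [abs_mul, Real.norm_eq_abs] using
          Finset.abs_sum_le_sum_abs (fun i => ξ i * z i) Finset.univ
    _ ≤ ∑ _ : Fin d, (1 + Sa α ξ) ^ (1 / a) * ‖z‖ := by
        gcongr with i
        · exact abs_le_one_add_rpow ha hα ξ i
        · exact norm_le_pi_norm z i
    _ = d * ‖z‖ * (1 + Sa α ξ) ^ (1 / a) := by
        rw [Fin.sum_const, nsmul_eq_mul]
        ring

variable {p : ℝ}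

theorem one_sub_cos_le (ha : 0 < a) (hα : ∀ i, a ≤ α i) (hp₀ : 0 ≤ p) (hp₂ : p ≤ 2)
    (t : ℝ) (ξ z : Fin d → ℝ) :
    1 - Real.cos (t * ∑ i, ξ i * z i) ≤
      2 * (|t| * d * ‖z‖) ^ p * (1 + Sa α ξ) ^ (p / a) := by
  have hS := nonneg α ξ
  calc 1 - Real.cos (t * ∑ i, ξ i * z i) ≤ 2 * |t * ∑ i, ξ i * z i| ^ p :=
        one_sub_cos_le_two_mul_abs_rpow hp₀ hp₂ _
    _ ≤ 2 * (|t| * (d * ‖z‖ * (1 + Sa α ξ) ^ (1 / a))) ^ p := by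
        rw [abs_mul]
        gcongr
        exact abs_sum_mul_le ha hα ξ z
    _ = 2 * (|t| * d * ‖z‖) ^ p * (1 + Sa α ξ) ^ (p / a) := by
        rw [← mul_assoc, ← mul_assoc, Real.mul_rpow (by positivity) (by positivity),
          ← Real.rpow_mul (by positivity), one_div_mul_eq_div, ← mul_assoc]

variable {k T η : ℝ}

theorem integral_exp_mul_one_sub_cos_le (ha : 0 < a) (hα : ∀ i, a ≤ α i) (hk : 0 < k)
    (hT : 0 ≤ T) (hp₀ : 0 ≤ p) (hp₂ : p ≤ 2) (hpη : p ≤ a * (1 - η)) (t : ℝ)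
    (ξ z : Fin d → ℝ) :
    ∫ r in (0 : ℝ)..T, Real.exp (-(k * r * Sa α ξ)) * (1 - Real.cos (t * ∑ i, ξ i * z i)) ≤
      2 * (T + 1 / k) * (|t| * d * ‖z‖) ^ p * (1 + Sa α ξ) ^ (-η) := by
  have hS := nonneg α ξ
  have one_sub_cos_nonneg : 0 ≤ 1 - Real.cos (t * ∑ i, ξ i * z i) :=
    sub_nonneg.2 (Real.cos_le_one _)
  have exponent_le : -1 + p / a ≤ -η := by
    have : p / a ≤ 1 - η := (div_le_iff₀' ha).2 hpη
    linarith
  rw [intervalIntegral.integral_mul_const]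
  calc (∫ r in (0 : ℝ)..T, Real.exp (-(k * r * Sa α ξ))) * (1 - Real.cos (t * ∑ i, ξ i * z i))
      ≤ ((T + 1 / k) * (1 + Sa α ξ)⁻¹) *
          (2 * (|t| * d * ‖z‖) ^ p * (1 + Sa α ξ) ^ (p / a)) := by
        gcongr
        · exact integral_exp_neg_mul_mul_le hk hS hT
        · exact one_sub_cos_le ha hα hp₀ hp₂ t ξ z
    _ = 2 * (T + 1 / k) * (|t| * d * ‖z‖) ^ p * (1 + Sa α ξ) ^ (-1 + p / a) := by
        rw [Real.rpow_add (by positivity), Real.rpow_neg_one]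
        ring
    _ ≤ 2 * (T + 1 / k) * (|t| * d * ‖z‖) ^ p * (1 + Sa α ξ) ^ (-η) := by
        gcongr
        linarith

theorem lintegral_integral_exp_mul_one_sub_cos_le (ha : 0 < a) (hα : ∀ i, a ≤ α i)
    (hk : 0 < k) (hT : 0 ≤ T) (hp₀ : 0 ≤ p) (hp₂ : p ≤ 2) (hpη : p ≤ a * (1 - η)) (t : ℝ)
    (μ : Measure (Fin d → ℝ)) (z : Fin d → ℝ) :
    ∫⁻ ξ, ENNReal.ofReal (∫ r in (0 : ℝ)..T,
        Real.exp (-(k * r * Sa α ξ)) * (1 - Real.cos (t * ∑ i, ξ i * z i))) ∂μ ≤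
      ENNReal.ofReal (2 * (T + 1 / k) * (|t| * d * ‖z‖) ^ p) *
        ∫⁻ ξ, ENNReal.ofReal ((1 + Sa α ξ) ^ (-η)) ∂μ := by
  rw [← lintegral_const_mul' _ _ ENNReal.ofReal_ne_top]
  refine lintegral_mono fun ξ => ?_
  rw [← ENNReal.ofReal_mul (by positivity)]
  exact ENNReal.ofReal_le_ofReal
    (integral_exp_mul_one_sub_cos_le ha hα hk hT hp₀ hp₂ hpη t ξ z)

end Sa

theorem stmt13_general {d : ℕ} (α : Fin d → ℝ) (hα : ∀ i, 0 < α i)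
    (α₀ : ℝ) (hα₀ : α₀ = ⨅ i, α i)
    (κ T η : ℝ) (hκ : 0 < κ) (hT : 0 ≤ T)
    (μ : Measure (Fin d → ℝ))
    (hμ : (∫⁻ ξ, ENNReal.ofReal ((1 + Sa α ξ) ^ (-η)) ∂μ) < ⊤)
    (β : ℝ) (hβ : 0 < β ∧ β ≤ min 1 (α₀ * (1 - η) / 2)) :
    ∃ c : ℝ, 0 < c ∧ ∀ z : Fin d → ℝ,
      (∫⁻ ξ, ENNReal.ofReal
          (∫ r in (0 : ℝ)..T,
            Real.exp (-(2 * κ * r * Sa α ξ)) *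
              (1 - Real.cos (2 * Real.pi * ∑ i, ξ i * z i))) ∂μ) ≤
        ENNReal.ofReal (c * ‖z‖ ^ (2 * β)) := by
  obtain ⟨hβ₀, hβ_le⟩ := hβ
  obtain ⟨hβ₁, hβη⟩ := le_min_iff.1 hβ_le
  have hα₀_pos : 0 < α₀ := by
    have hα₀_nonneg : 0 ≤ α₀ := hα₀ ▸ Real.iInf_nonneg fun i => (hα i).le
    refine hα₀_nonneg.lt_of_ne' fun h => ?_
    rw [h] at hβη
    linarith
  have hα₀_le (i : Fin d) : α₀ ≤ α i := hα₀ ▸ ciInf_le (Set.finite_range α).bddBelow i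
  set I := ∫⁻ ξ, ENNReal.ofReal ((1 + Sa α ξ) ^ (-η)) ∂μ
  set M := 2 * (T + 1 / (2 * κ)) * (|2 * Real.pi| * d) ^ (2 * β)
  refine ⟨M * I.toReal + 1, by positivity, fun z => ?_⟩
  refine (Sa.lintegral_integral_exp_mul_one_sub_cos_le (p := 2 * β) (η := η) hα₀_pos hα₀_le
    (by positivity) hT (by linarith) (by linarith) (by linarith) _ μ z).trans ?_
  calc ENNReal.ofReal (2 * (T + 1 / (2 * κ)) * (|2 * Real.pi| * d * ‖z‖) ^ (2 * β)) * I
      = ENNReal.ofReal (M * I.toReal * ‖z‖ ^ (2 * β)) := by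
        rw [Real.mul_rpow (by positivity) (norm_nonneg z), ← mul_assoc, mul_right_comm M,
          ENNReal.ofReal_mul (q := I.toReal) (by positivity), ENNReal.ofReal_toReal hμ.ne]
    _ ≤ ENNReal.ofReal ((M * I.toReal + 1) * ‖z‖ ^ (2 * β)) := by
        gcongr
        linarith

theorem stmt13 {d : ℕ} (hd : 0 < d) (α : Fin d → ℝ)
    (hα : ∀ i, 0 < α i ∧ α i ≤ 2 ∧ α i ≠ 1)
    (α₀ : ℝ) (hα₀ : α₀ = ⨅ i, α i)
    (κ T η : ℝ) (hκ : 0 < κ) (hT : 0 < T) (hη : η ∈ Set.Ioo (0 : ℝ) 1)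
    (μ : Measure (Fin d → ℝ))
    (hμ : (∫⁻ ξ, ENNReal.ofReal ((1 + Sa α ξ) ^ (-η)) ∂μ) < ⊤)
    (K : Set (Fin d → ℝ)) (hK : IsCompact K)
    (β : ℝ) (hβ : 0 < β ∧ β < min (1 / 2) (α₀ * (1 - η) / 2)) :
    ∃ c : ℝ, 0 < c ∧ ∀ z ∈ K,
      (∫⁻ ξ, ENNReal.ofReal
          (∫ r in (0 : ℝ)..T,
            Real.exp (-(2 * κ * r * Sa α ξ)) *
              (1 - Real.cos (2 * Real.pi * ∑ i, ξ i * z i))) ∂μ) ≤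
        ENNReal.ofReal (c * (‖z‖ + ‖z‖ ^ (2 * β))) := by
  obtain ⟨c, hc, hbound⟩ := stmt13_general α (fun i => (hα i).1) α₀ hα₀ κ T η hκ hT.le μ hμ β
    ⟨hβ.1, hβ.2.le.trans (min_le_min_right _ (by norm_num))⟩
  exact ⟨c, hc, fun z _ => (hbound z).trans <| ENNReal.ofReal_le_ofReal <|
    mul_le_mul_of_nonneg_left (le_add_of_nonneg_left (norm_nonneg z)) hc.le⟩
end

section
/- Let α = (α_1,…,α_d) be a multi-index with α_i ∈ (0,2] for i = 1,…,d, and let η > 0. Then ∫_{ℝ^d} (1 + S_α(ξ))^{−η} dξ < ∞ (integral with respect to Lebesgue measure) if and only if η > Σ_{i=1}^d 1/α_i. -/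
open MeasureTheory

/-!
Put `σ = ∑ i, 1 / α i`. The dilation `ξ_i ↦ r ^ (1 / α i) * ξ_i` multiplies `S_α` by `r` and
Lebesgue measure by `r ^ σ`, so the sublevel set `{S_α < r}` has volume exactly `C * r ^ σ` with
`0 < C < ∞`. Since `1 + S_α` is comparable to `max 1 S_α`, integrating the measures of the
superlevel sets of `(max 1 S_α) ^ (-η)` turns the question into the convergence of
`∫ t in (0, 1), t ^ (-σ / η)`, which holds if and only if `σ < η`.
-/

open Set
open scoped ENNReal

section PowerGrowth

variable {X : Type*} [MeasurableSpace X] {μ : Measure X} {g : X → ℝ} {η σ : ℝ}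

theorem one_add_rpow_neg_le_max_one_rpow_neg {s : ℝ} (hs : 0 ≤ s) (hη : 0 ≤ η) :
    (1 + s) ^ (-η) ≤ max 1 s ^ (-η) :=
  Real.rpow_le_rpow_of_nonpos (by positivity)
    (max_le (le_add_of_nonneg_right hs) (le_add_of_nonneg_left zero_le_one)) (neg_nonpos.2 hη)

theorem max_one_rpow_neg_le_two_rpow_mul {s : ℝ} (hs : 0 ≤ s) (hη : 0 ≤ η) :
    max 1 s ^ (-η) ≤ 2 ^ η * (1 + s) ^ (-η) := by
  have hle : (1 + s) / 2 ≤ max 1 s := by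
    linarith [le_max_left 1 s, le_max_right 1 s]
  calc max 1 s ^ (-η) ≤ ((1 + s) / 2) ^ (-η) :=
        Real.rpow_le_rpow_of_nonpos (by positivity) hle (neg_nonpos.2 hη)
    _ = 2 ^ η * (1 + s) ^ (-η) := by
        rw [Real.div_rpow (by positivity) zero_le_two, Real.rpow_neg zero_le_two, div_inv_eq_mul,
          mul_comm]

theorem lintegral_one_add_rpow_neg_lt_top_iff_max_one (hg : ∀ x, 0 ≤ g x) (hη : 0 ≤ η) :
    ∫⁻ x, ENNReal.ofReal ((1 + g x) ^ (-η)) ∂μ < ∞ ↔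
      ∫⁻ x, ENNReal.ofReal (max 1 (g x) ^ (-η)) ∂μ < ∞ := by
  refine ⟨fun h ↦ ?_, fun h ↦ ?_⟩
  · calc ∫⁻ x, ENNReal.ofReal (max 1 (g x) ^ (-η)) ∂μ
        ≤ ∫⁻ x, ENNReal.ofReal (2 ^ η) * ENNReal.ofReal ((1 + g x) ^ (-η)) ∂μ := by
          refine lintegral_mono fun x ↦ ?_
          rw [← ENNReal.ofReal_mul (by positivity)]
          exact ENNReal.ofReal_le_ofReal (max_one_rpow_neg_le_two_rpow_mul (hg x) hη)
      _ = ENNReal.ofReal (2 ^ η) * ∫⁻ x, ENNReal.ofReal ((1 + g x) ^ (-η)) ∂μ :=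
          lintegral_const_mul' _ _ ENNReal.ofReal_ne_top
      _ < ∞ := ENNReal.mul_lt_top ENNReal.ofReal_lt_top h
  · exact (lintegral_mono fun x ↦ ENNReal.ofReal_le_ofReal
      (one_add_rpow_neg_le_max_one_rpow_neg (hg x) hη)).trans_lt h

theorem lt_max_one_rpow_neg_iff {s t : ℝ} (ht : 0 < t) (hη : 0 < η) :
    t < max 1 s ^ (-η) ↔ t < 1 ∧ s < t ^ (-η⁻¹) := by
  have hone : 1 < t ^ (-η⁻¹) ↔ t < 1 := by
    simp [Real.one_lt_rpow_iff_of_pos ht, hη, hη.le]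
  rw [← inv_inv (-η), Real.lt_rpow_inv_iff_of_neg ht (by positivity) (by simpa using hη),
    max_lt_iff, inv_neg, hone]

theorem lintegral_max_one_rpow_neg (hg : AEMeasurable g μ) (hη : 0 < η) {C : ℝ≥0∞}
    (hvol : ∀ r, 1 < r → μ {x | g x < r} = C * ENNReal.ofReal (r ^ σ)) :
    ∫⁻ x, ENNReal.ofReal (max 1 (g x) ^ (-η)) ∂μ =
      ∫⁻ t in Ioo (0 : ℝ) 1, C * ENNReal.ofReal (t ^ (-(σ / η))) := by
  have hlevel : ∀ t ∈ Ioi (0 : ℝ), μ {x | t < max 1 (g x) ^ (-η)} =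
      (Iio 1).indicator (fun t ↦ C * ENNReal.ofReal (t ^ (-(σ / η)))) t := by
    intro t ht
    simp only [lt_max_one_rpow_neg_iff ht hη]
    by_cases ht1 : t < 1
    · have hr : 1 < t ^ (-η⁻¹) :=
        Real.one_lt_rpow_of_pos_of_lt_one_of_neg ht ht1 (by simpa using hη)
      have hexp : -η⁻¹ * σ = -(σ / η) := by ring
      simp [ht1, hvol _ hr, ← Real.rpow_mul ht.le, hexp]
    · simp [ht1]
  rw [lintegral_eq_lintegral_meas_lt μ (.of_forall fun x ↦ by positivity)
      ((aemeasurable_const.max hg).pow_const _), setLIntegral_congr_fun measurableSet_Ioi hlevel,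
    setLIntegral_indicator measurableSet_Iio, inter_comm, Ioi_inter_Iio]

theorem lintegral_one_add_rpow_neg_lt_top_iff (hg : AEMeasurable g μ) (hg0 : ∀ x, 0 ≤ g x)
    (hη : 0 < η) {C : ℝ≥0∞} (hC0 : C ≠ 0) (hC : C ≠ ∞)
    (hvol : ∀ r, 1 < r → μ {x | g x < r} = C * ENNReal.ofReal (r ^ σ)) :
    ∫⁻ x, ENNReal.ofReal ((1 + g x) ^ (-η)) ∂μ < ∞ ↔ σ < η := by
  have hnonneg : 0 ≤ᵐ[volume.restrict (Ioo (0 : ℝ) 1)] fun t ↦ t ^ (-(σ / η)) :=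
    ae_restrict_of_forall_mem measurableSet_Ioo fun t ht ↦ Real.rpow_nonneg ht.1.le _
  have hmeas : Measurable fun t : ℝ ↦ t ^ (-(σ / η)) := by fun_prop
  calc ∫⁻ x, ENNReal.ofReal ((1 + g x) ^ (-η)) ∂μ < ∞
      ↔ C * ∫⁻ t in Ioo (0 : ℝ) 1, ENNReal.ofReal (t ^ (-(σ / η))) < ∞ := by
        rw [lintegral_one_add_rpow_neg_lt_top_iff_max_one hg0 hη.le,
          lintegral_max_one_rpow_neg hg hη hvol, lintegral_const_mul' _ _ hC]
    _ ↔ ∫⁻ t in Ioo (0 : ℝ) 1, ENNReal.ofReal (t ^ (-(σ / η))) < ∞ := by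
        simp [lt_top_iff_ne_top, ENNReal.mul_eq_top, hC0, hC]
    _ ↔ IntegrableOn (fun t : ℝ ↦ t ^ (-(σ / η))) (Ioo 0 1) := by
        rw [lt_top_iff_ne_top,
          lintegral_ofReal_ne_top_iff_integrable hmeas.aestronglyMeasurable hnonneg, IntegrableOn]
    _ ↔ σ < η := by
        rw [intervalIntegral.integrableOn_Ioo_rpow_iff zero_lt_one, neg_lt_neg_iff,
          div_lt_one hη]

end PowerGrowth

section Dilation

variable {ι : Type*} [Fintype ι]

theorem volume_preimage_pi_mul {c : ι → ℝ} (hc : ∀ i, c i ≠ 0) (s : Set (ι → ℝ)) :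
    volume ((c * ·) ⁻¹' s) = ENNReal.ofReal |(∏ i, c i)⁻¹| * volume s := by
  classical
  have hdet : LinearMap.det (Matrix.diagonal c).toLin' = ∏ i, c i := by
    rw [LinearMap.det_toLin', Matrix.det_diagonal]
  have hmul : ⇑(Matrix.diagonal c).toLin' = (c * ·) := by
    ext ξ i
    simp [Matrix.mulVec_diagonal]
  rw [← hmul, ← hdet]
  exact Measure.addHaar_preimage_linearMap volume
    (hdet ▸ Finset.prod_ne_zero_iff.2 fun i _ ↦ hc i) s

variable {α : ι → ℝ}

theorem sum_abs_rpow_dilation (hα : ∀ i, α i ≠ 0) {r : ℝ} (hr : 0 ≤ r) (ξ : ι → ℝ) :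
    ∑ i, |r ^ (1 / α i) * ξ i| ^ α i = r * ∑ i, |ξ i| ^ α i := by
  rw [Finset.mul_sum]
  refine Finset.sum_congr rfl fun i _ ↦ ?_
  rw [abs_mul, abs_of_nonneg (by positivity), Real.mul_rpow (by positivity) (abs_nonneg _),
    ← Real.rpow_mul hr, one_div_mul_cancel (hα i), Real.rpow_one]

theorem volume_sum_abs_rpow_lt (hα : ∀ i, α i ≠ 0) {r : ℝ} (hr : 0 < r) :
    volume {ξ : ι → ℝ | ∑ i, |ξ i| ^ α i < r} =
      volume {ξ : ι → ℝ | ∑ i, |ξ i| ^ α i < 1} * ENNReal.ofReal (r ^ ∑ i, 1 / α i) := by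
  have hpreimage : {ξ : ι → ℝ | ∑ i, |ξ i| ^ α i < r} =
      ((fun i ↦ r⁻¹ ^ (1 / α i)) * ·) ⁻¹' {ξ | ∑ i, |ξ i| ^ α i < 1} := by
    ext ξ
    simp only [mem_ofPred_eq, mem_preimage, Pi.mul_apply,
      sum_abs_rpow_dilation hα (inv_nonneg.2 hr.le), inv_mul_lt_one₀ hr]
  have hdet : |(∏ i, r⁻¹ ^ (1 / α i))⁻¹| = r ^ ∑ i, 1 / α i := by
    rw [← Real.rpow_sum_of_pos (inv_pos.2 hr), Real.inv_rpow hr.le, inv_inv,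
      abs_of_nonneg (by positivity)]
  rw [hpreimage, volume_preimage_pi_mul fun i ↦ by positivity, hdet, mul_comm]

theorem continuous_sum_abs_rpow (hα : ∀ i, 0 ≤ α i) :
    Continuous fun ξ : ι → ℝ ↦ ∑ i, |ξ i| ^ α i :=
  continuous_finsetSum _ fun i _ ↦ (continuous_apply i).abs.rpow_const fun _ ↦ .inr (hα i)

theorem volume_sum_abs_rpow_lt_one_ne_zero (hα : ∀ i, 0 < α i) :
    volume {ξ : ι → ℝ | ∑ i, |ξ i| ^ α i < 1} ≠ 0 :=
  (isOpen_lt (continuous_sum_abs_rpow fun i ↦ (hα i).le) continuous_const).measure_ne_zero volume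
    ⟨0, by simp [Real.zero_rpow, (hα _).ne']⟩

theorem volume_sum_abs_rpow_lt_one_ne_top (hα : ∀ i, 0 < α i) :
    volume {ξ : ι → ℝ | ∑ i, |ξ i| ^ α i < 1} ≠ ∞ := by
  have hsub : {ξ : ι → ℝ | ∑ i, |ξ i| ^ α i < 1} ⊆ Icc (-1) 1 := by
    intro ξ hξ
    have habs : ∀ i, |ξ i| ≤ 1 := fun i ↦ by
      have hterm : |ξ i| ^ α i ≤ ∑ j, |ξ j| ^ α j :=
        Finset.single_le_sum (f := fun j ↦ |ξ j| ^ α j) (fun j _ ↦ by positivity)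
          (Finset.mem_univ i)
      exact (Real.rpow_le_rpow_iff (abs_nonneg _) zero_le_one (hα i)).1
        (by simpa using hterm.trans hξ.le)
    exact ⟨fun i ↦ (abs_le.1 (habs i)).1, fun i ↦ (abs_le.1 (habs i)).2⟩
  exact measure_ne_top_of_subset hsub isCompact_Icc.measure_ne_top

theorem stmt17_general (hα : ∀ i, 0 < α i) {η : ℝ} (hη : 0 < η) :
    ∫⁻ ξ : ι → ℝ, ENNReal.ofReal ((1 + ∑ i, |ξ i| ^ α i) ^ (-η)) < ∞ ↔ ∑ i, 1 / α i < η :=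
  lintegral_one_add_rpow_neg_lt_top_iff
    (continuous_sum_abs_rpow fun i ↦ (hα i).le).aemeasurable
    (fun _ ↦ by positivity) hη
    (volume_sum_abs_rpow_lt_one_ne_zero hα) (volume_sum_abs_rpow_lt_one_ne_top hα)
    fun _ hr ↦ volume_sum_abs_rpow_lt (fun i ↦ (hα i).ne') (zero_lt_one.trans hr)

end Dilation

theorem stmt17 {d : ℕ} (hd : 0 < d) (α : Fin d → ℝ)
    (hα : ∀ i, 0 < α i ∧ α i ≤ 2) (η : ℝ) (hη : 0 < η) :
    (∫⁻ ξ : Fin d → ℝ, ENNReal.ofReal ((1 + Sa α ξ) ^ (-η))) < ⊤ ↔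
      (∑ i, 1 / α i) < η :=
  stmt17_general (fun i ↦ (hα i).1) hη
end
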